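/- Let n ≥ 1 and let f : ℝⁿ → ℝ be a smooth convex function whose Hessian D²f(x) is positive definite at every x ∈ ℝⁿ. Suppose there exists a nonnegative function φ : (0,∞) → ℝ such that V*_x(k) = φ(k) for all x ∈ ℝⁿ and all k > 0, where V*_x(k) = ∫_{{y : f(y) < f(x) + ⟨∇f(x), y − x⟩ + k}} (f(x) + ⟨∇f(x), y − x⟩ + k − f(y)) dy. Then det D²f(x) is a positive constant, independent of x ∈ ℝⁿ. -/

import Mathlib

open MeasureTheory Filter
open scoped RealInnerProductSpace Topology

/-- The Hessian matrix of `f : ℝⁿ → ℝ` at a point `x`, with entries the second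
partial derivatives of `f`. -/
noncomputable def hessianMatrix {n : ℕ} (f : EuclideanSpace ℝ (Fin n) → ℝ)
    (x : EuclideanSpace ℝ (Fin n)) : Matrix (Fin n) (Fin n) ℝ :=
  Matrix.of fun i j =>
    iteratedFDeriv ℝ 2 f x ![EuclideanSpace.single i 1, EuclideanSpace.single j 1]

open scoped MatrixOrder Matrix.Norms.L2Operator
open Matrix Asymptotics Module

/-- Second-order Taylor expansion with little-o remainder. -/
lemma ContDiff.sub_second_order_taylor_isLittleO {E : Type*} [NormedAddCommGroup E]
    [NormedSpace ℝ E] {f : E → ℝ} (hf : ContDiff ℝ 2 f) (x : E) :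
    (fun v => f (x + v) - f x - fderiv ℝ f x v - fderiv ℝ (fderiv ℝ f) x v v / 2)
      =o[𝓝 0] fun v => ‖v‖ ^ 2 := by
  have hdiff : Differentiable ℝ f := hf.differentiable (by norm_num)
  have hdiff' : Differentiable ℝ (fderiv ℝ f) :=
    (hf.fderiv_right (m := 1) (by norm_num)).differentiable (by norm_num)
  have hsymm : IsSymmSndFDerivAt ℝ f x := hf.contDiffAt.isSymmSndFDerivAt (by simp)
  set D := fderiv ℝ (fderiv ℝ f) x with hD
  set q : E → ℝ := fun v => f (x + v) - f x - fderiv ℝ f x v - D v v / 2 with hq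
  have hq' : ∀ v, HasFDerivAt q (fderiv ℝ f (x + v) - fderiv ℝ f x - D v) v := by
    intro v
    have h1 : HasFDerivAt (fun v => f (x + v)) (fderiv ℝ f (x + v)) v := by
      simpa using! (hdiff (x + v)).hasFDerivAt.comp v ((hasFDerivAt_id v).const_add x)
    have h2 : HasFDerivAt (fun v => D v v) (D v + D.flip v) v := by
      simpa [ContinuousLinearMap.ext_iff] using! D.hasFDerivAt.clm_apply (hasFDerivAt_id v)
    refine (((h1.sub_const (f x)).sub (fderiv ℝ f x).hasFDerivAt).sub
      (h2.mul_const (2⁻¹ : ℝ))).congr_fderiv ?_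
    ext w
    have := hsymm v w
    simp only [_root_.sub_apply, _root_.smul_apply, _root_.add_apply, ContinuousLinearMap.flip_apply,
      smul_eq_mul, hD, this]
    ring
  refine isLittleO_iff.2 fun ε hε => ?_
  have hlo := isLittleO_iff.1 (hasFDerivAt_iff_isLittleO_nhds_zero.1 (hdiff' x).hasFDerivAt) hε
  obtain ⟨δ, hδ, hball⟩ := Metric.eventually_nhds_iff_ball.1 hlo
  filter_upwards [Metric.ball_mem_nhds (0 : E) hδ] with v hv
  have hbound : ∀ u ∈ Metric.closedBall (0 : E) ‖v‖,
      ‖fderiv ℝ f (x + u) - fderiv ℝ f x - D u‖ ≤ ε * ‖v‖ := by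
    intro u hu
    rw [mem_closedBall_zero_iff] at hu
    rw [mem_ball_zero_iff] at hv
    exact (hball u (mem_ball_zero_iff.2 (hu.trans_lt hv))).trans
      (mul_le_mul_of_nonneg_left hu hε.le)
  have := (convex_closedBall (0 : E) ‖v‖).norm_image_sub_le_of_norm_hasFDerivWithin_le
    (fun u _ => (hq' u).hasFDerivWithinAt) hbound (x := 0) (y := v)
    (by simp) (by simp)
  simpa [hq, pow_two, mul_assoc] using this

/-- A convex function dominating `c ‖v‖²` near its zero at the origin has small sublevel sets
contained in balls of radius comparable to the square root of the level, and is nonnegative. -/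
lemma ConvexOn.quadratic_growth {E : Type*} [NormedAddCommGroup E] [NormedSpace ℝ E]
    {h : E → ℝ} (hconv : ConvexOn ℝ Set.univ h) (h0 : h 0 = 0) {c δ : ℝ} (hc : 0 < c)
    (hδ : 0 < δ) (hloc : ∀ v, ‖v‖ ≤ δ → c * ‖v‖ ^ 2 ≤ h v) (v : E) :
    min (c * ‖v‖ ^ 2) (c * δ ^ 2) ≤ h v := by
  rcases le_or_gt ‖v‖ δ with hv | hv
  · exact (min_le_left _ _).trans (hloc v hv)
  refine (min_le_right _ _).trans ?_
  have hv0 : 0 < ‖v‖ := hδ.trans hv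
  set s := δ / ‖v‖ with hs
  have hs0 : 0 < s := by positivity
  have hs1 : s ≤ 1 := (div_le_one hv0).2 hv.le
  have hnorm : ‖s • v‖ = δ := by
    rw [norm_smul, Real.norm_of_nonneg hs0.le, hs, div_mul_cancel₀ _ hv0.ne']
  have h1 := hloc (s • v) hnorm.le
  have h2 := hconv.2 (Set.mem_univ v) (Set.mem_univ 0) hs0.le (sub_nonneg.2 hs1)
    (add_sub_cancel _ _)
  simp only [smul_zero, add_zero, h0, smul_eq_mul, mul_zero] at h2
  rw [hnorm] at h1
  have hpos : 0 < c * δ ^ 2 := by positivity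
  nlinarith

/-- Rescaled caps of a convex function with a nondegenerate second-order expansion at the origin
converge in volume to the cap of the osculating paraboloid. -/
lemma tendsto_integral_rescaled_cap {E : Type*} [NormedAddCommGroup E] [NormedSpace ℝ E]
    [FiniteDimensional ℝ E] [MeasurableSpace E] [BorelSpace E] (μ : Measure E)
    [IsFiniteMeasureOnCompacts μ] {h Q : E → ℝ} (hcont : Continuous h)
    (hconv : ConvexOn ℝ Set.univ h) (h0 : h 0 = 0) {c : ℝ} (hc : 0 < c)
    (hQ : ∀ v, c * ‖v‖ ^ 2 ≤ Q v) (hQs : ∀ (t : ℝ) v, Q (t • v) = t ^ 2 * Q v)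
    (hlo : (fun v => h v - Q v) =o[𝓝 0] fun v => ‖v‖ ^ 2) :
    Tendsto (fun t : ℝ => ∫ z, max (1 - h (t • z) / t ^ 2) 0 ∂μ) (𝓝[>] 0)
      (𝓝 (∫ z, max (1 - Q z) 0 ∂μ)) := by
  obtain ⟨δ, hδ, hloc⟩ : ∃ δ > 0, ∀ v, ‖v‖ ≤ δ → c / 2 * ‖v‖ ^ 2 ≤ h v := by
    obtain ⟨δ, hδ, hball⟩ := Metric.nhds_basis_closedBall.eventually_iff.1
      (isLittleO_iff.1 hlo (half_pos hc))
    refine ⟨δ, hδ, fun v hv => ?_⟩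
    have h1 := hball (mem_closedBall_zero_iff.2 hv)
    rw [Real.norm_of_nonneg (sq_nonneg _)] at h1
    have h2 := (abs_le.1 h1).1
    linarith [hQ v]
  have hgrowth := hconv.quadratic_growth h0 (half_pos hc) hδ hloc
  have hnonneg : ∀ v, 0 ≤ h v := fun v => le_trans (by positivity) (hgrowth v)
  set R := Real.sqrt (2 / c) with hR
  refine tendsto_integral_filter_of_dominated_convergence
    ((Metric.closedBall (0 : E) R).indicator fun _ => (1 : ℝ)) ?_ ?_ ?_ ?_
  · exact Eventually.of_forall fun t => (by fun_prop : Continuous fun z =>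
      max (1 - h (t • z) / t ^ 2) 0).aestronglyMeasurable
  · have hsmall : ∀ᶠ t : ℝ in 𝓝[>] 0, t ^ 2 < c / 2 * δ ^ 2 := by
      refine nhdsWithin_le_nhds (ContinuousAt.eventually_lt (f := fun t : ℝ => t ^ 2)
        (by fun_prop) continuousAt_const ?_)
      simp only [ne_eq, OfNat.ofNat_ne_zero, not_false_eq_true, zero_pow]
      positivity
    filter_upwards [hsmall, self_mem_nhdsWithin] with t ht ht0
    have ht0 : 0 < t := ht0
    refine Eventually.of_forall fun z => ?_
    rw [Real.norm_of_nonneg (le_max_right _ _)]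
    by_cases hz : z ∈ Metric.closedBall (0 : E) R
    · rw [Set.indicator_of_mem hz]
      exact max_le (by linarith [div_nonneg (hnonneg (t • z)) (sq_nonneg t)]) zero_le_one
    · rw [Set.indicator_of_notMem hz]
      refine max_le ?_ le_rfl
      rw [mem_closedBall_zero_iff, not_le] at hz
      rw [hR, Real.sqrt_lt' ((Real.sqrt_nonneg _).trans_lt hz), div_lt_iff₀ hc] at hz
      rw [sub_nonpos, le_div_iff₀ (by positivity), one_mul]
      refine le_trans (le_min ?_ ht.le) (hgrowth (t • z))
      rw [norm_smul, Real.norm_of_nonneg ht0.le, mul_pow]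
      nlinarith [sq_nonneg t]
  · exact (integrable_indicator_iff Metric.isClosed_closedBall.measurableSet).2
      (integrableOn_const (isCompact_closedBall _ _).measure_lt_top.ne)
  · refine Eventually.of_forall fun z => ?_
    refine Tendsto.max (Tendsto.const_sub _ ?_) tendsto_const_nhds
    have hz : Tendsto (fun t : ℝ => t • z) (𝓝[>] 0) (𝓝 0) := by
      refine ((by fun_prop : Continuous fun t : ℝ => t • z).tendsto' 0 0 (by simp)).mono_left
        nhdsWithin_le_nhds
    have hlo' : (fun t : ℝ => h (t • z) - Q (t • z)) =o[𝓝[>] 0] fun t => t ^ 2 := by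
      refine (hlo.comp_tendsto hz).trans_isBigO ?_
      refine IsBigO.of_bound (‖z‖ ^ 2) (Eventually.of_forall fun t => ?_)
      simp [norm_smul, mul_pow, mul_comm]
    have hlim := hlo'.tendsto_div_nhds_zero.add_const (Q z)
    rw [zero_add] at hlim
    refine hlim.congr' ?_
    filter_upwards [self_mem_nhdsWithin] with t ht
    have ht : t ≠ 0 := (Set.mem_Ioi.1 ht).ne'
    rw [hQs]
    field_simp
    ring

lemma integral_cap_pos {E : Type*} [NormedAddCommGroup E] [NormedSpace ℝ E]
    [FiniteDimensional ℝ E] [MeasurableSpace E] [BorelSpace E] (μ : Measure E)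
    [IsFiniteMeasureOnCompacts μ] [μ.IsOpenPosMeasure] :
    0 < ∫ z : E, max (1 - ‖z‖ ^ 2 / 2) 0 ∂μ := by
  refine Continuous.integral_pos_of_hasCompactSupport_nonneg_nonzero (x := 0) (by fun_prop)
    (HasCompactSupport.of_support_subset_isCompact (isCompact_closedBall (0 : E) 2) ?_)
    (fun z => le_max_right _ _) (by simp)
  intro z hz
  rw [mem_closedBall_zero_iff]
  contrapose! hz
  rw [Function.notMem_support]
  exact max_eq_right (by nlinarith)

lemma integral_comp_linearMap {E F : Type*} [NormedAddCommGroup E] [NormedSpace ℝ E]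
    [FiniteDimensional ℝ E] [MeasurableSpace E] [BorelSpace E] (μ : Measure E)
    [μ.IsAddHaarMeasure] [NormedAddCommGroup F] [NormedSpace ℝ F] {L : E →ₗ[ℝ] E}
    (hL : LinearMap.det L ≠ 0) (g : E → F) :
    ∫ z, g (L z) ∂μ = |(LinearMap.det L)⁻¹| • ∫ z, g z ∂μ := by
  have hemb : MeasurableEmbedding L :=
    (LinearEquiv.ofIsUnitDet (f := L) (v := finBasis ℝ E) (v' := finBasis ℝ E)
      (by simpa using hL)).toContinuousLinearEquiv.toHomeomorph.measurableEmbedding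
  rw [← hemb.integral_map, Measure.map_linearMap_addHaar_eq_smul_addHaar μ hL,
    integral_smul_measure, ENNReal.toReal_ofReal (abs_nonneg _)]

/-- A positive definite matrix is the Gram matrix of an invertible linear map. -/
lemma Matrix.PosDef.exists_linearMap {n : ℕ} {H : Matrix (Fin n) (Fin n) ℝ} (hH : H.PosDef) :
    ∃ L : EuclideanSpace ℝ (Fin n) →ₗ[ℝ] EuclideanSpace ℝ (Fin n),
      LinearMap.det L ≠ 0 ∧ H.det = LinearMap.det L ^ 2 ∧
      ∀ v : EuclideanSpace ℝ (Fin n), ‖L v‖ ^ 2 = v.ofLp ⬝ᵥ H *ᵥ v.ofLp := by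
  obtain ⟨B, rfl⟩ : ∃ B, H = Bᴴ * B :=
    CStarAlgebra.nonneg_iff_eq_star_mul_self.1 hH.posSemidef.nonneg
  have hdet : (Bᴴ * B).det = LinearMap.det (Matrix.toEuclideanLin B) ^ 2 := by
    simp [Matrix.det_mul, pow_two]
  refine ⟨Matrix.toEuclideanLin B, ?_, hdet, fun v => ?_⟩
  · intro h
    have := hH.det_pos
    rw [hdet, h] at this
    simp at this
  · rw [EuclideanSpace.real_norm_sq_eq, ← Matrix.mulVec_mulVec, Matrix.dotProduct_mulVec,
      Matrix.conjTranspose_eq_transpose_of_trivial, Matrix.vecMul_transpose]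
    simp [dotProduct, pow_two]

lemma dotProduct_hessianMatrix_mulVec {n : ℕ} (f : EuclideanSpace ℝ (Fin n) → ℝ)
    (x v : EuclideanSpace ℝ (Fin n)) :
    v.ofLp ⬝ᵥ hessianMatrix f x *ᵥ v.ofLp = fderiv ℝ (fderiv ℝ f) x v v := by
  have hv : v = ∑ i, v i • EuclideanSpace.single i (1 : ℝ) := by
    simpa using ((EuclideanSpace.basisFun (Fin n) ℝ).sum_repr v).symm
  conv_rhs => rw [hv]
  simp only [map_sum, map_smul, _root_.sum_apply, _root_.smul_apply, smul_eq_mul,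
    dotProduct, mulVec, hessianMatrix, Matrix.of_apply, iteratedFDeriv_two_apply,
    Matrix.cons_val_zero, Matrix.cons_val_one, Finset.mul_sum]
  rw [Finset.sum_comm]
  refine Finset.sum_congr rfl fun i _ => Finset.sum_congr rfl fun j _ => ?_
  ring

/-- The volume of the cap of height `t²` over `x`, after parabolic rescaling. -/
lemma setIntegral_cap_eq_rescaled {E : Type*} [NormedAddCommGroup E] [NormedSpace ℝ E]
    [FiniteDimensional ℝ E] [MeasurableSpace E] [BorelSpace E] (μ : Measure E)
    [μ.IsAddHaarMeasure] {f l : E → ℝ} (hf : Continuous f) (hl : Continuous l)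
    (x : E) {t : ℝ} (ht : 0 < t) :
    ∫ y in {y | f y < l (y - x) + t ^ 2}, (l (y - x) + t ^ 2 - f y) ∂μ =
      t ^ (finrank ℝ E + 2) * ∫ z, max (1 - (f (x + t • z) - l (t • z)) / t ^ 2) 0 ∂μ := by
  have hmax : ∫ y in {y | f y < l (y - x) + t ^ 2}, (l (y - x) + t ^ 2 - f y) ∂μ =
      ∫ y, max (l (y - x) + t ^ 2 - f y) 0 ∂μ := by
    rw [← integral_indicator (measurableSet_lt (by fun_prop) (by fun_prop))]
    refine integral_congr_ae (Eventually.of_forall fun y => ?_)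
    by_cases hy : f y < l (y - x) + t ^ 2
    · simp only [Set.indicator_of_mem (show y ∈ {y | f y < l (y - x) + t ^ 2} from hy)]
      exact (max_eq_left (by linarith)).symm
    · simp only [Set.indicator_of_notMem (show y ∉ {y | f y < l (y - x) + t ^ 2} from hy)]
      exact (max_eq_right (by linarith)).symm
  have hscale : ∀ z : E, max (1 - (f (x + t • z) - l (t • z)) / t ^ 2) 0 =
      (t ^ 2)⁻¹ * max (l (t • z) + t ^ 2 - f (x + t • z)) 0 := by
    intro z
    rw [mul_max_of_nonneg _ _ (by positivity), mul_zero]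
    congr 1
    field_simp
    ring
  simp_rw [hmax, hscale]
  rw [integral_const_mul,
    Measure.integral_comp_smul_of_nonneg μ (fun v => max (l v + t ^ 2 - f (x + v)) 0) t
      (hR := ht.le), ← integral_add_left_eq_self (μ := μ) _ x]
  simp only [add_sub_cancel_left, smul_eq_mul]
  field_simp
  ring

theorem hessian_det_constant_of_constant_volume (n : ℕ) (hn : 1 ≤ n)
    (f : EuclideanSpace ℝ (Fin n) → ℝ)
    (hf : ContDiff ℝ (⊤ : ℕ∞) f) (hconv : ConvexOn ℝ Set.univ f)
    (hhess : ∀ x, (hessianMatrix f x).PosDef)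
    (φ : ℝ → ℝ) (hφ : ∀ k, 0 < k → 0 ≤ φ k)
    (hV : ∀ (x : EuclideanSpace ℝ (Fin n)) (k : ℝ), 0 < k →
      (∫ y in {y | f y < f x + ⟪gradient f x, y - x⟫ + k},
        (f x + ⟪gradient f x, y - x⟫ + k - f y)) = φ k) :
    ∃ c : ℝ, 0 < c ∧ ∀ x, (hessianMatrix f x).det = c := by
  set C := ∫ z : EuclideanSpace ℝ (Fin n), max (1 - ‖z‖ ^ 2 / 2) 0 with hC
  have hCpos : 0 < C := integral_cap_pos volume
  have hlim : ∀ x, Tendsto (fun t : ℝ => φ (t ^ 2) / t ^ (n + 2)) (𝓝[>] 0)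
      (𝓝 ((√(hessianMatrix f x).det)⁻¹ * C)) := by
    intro x
    obtain ⟨L, hL, hdet, hnorm⟩ := (hhess x).exists_linearMap
    have hinj : Function.Injective L :=
      (LinearMap.equivOfDetNeZero L hL).injective
    obtain ⟨K, hK, hanti⟩ := L.exists_antilipschitzWith (LinearMap.ker_eq_bot.2 hinj)
    have hgrad : ∀ v, ⟪gradient f x, v⟫ = fderiv ℝ f x v := fun v => by
      rw [gradient, InnerProductSpace.toDual_symm_apply]
    set h : EuclideanSpace ℝ (Fin n) → ℝ := fun v => f (x + v) - (f x + ⟪gradient f x, v⟫) with hh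
    have hconvh : ConvexOn ℝ Set.univ h := by
      refine ConvexOn.sub (by simpa using! hconv.translate_right x) ?_
      refine (concaveOn_const (f x) convex_univ).add
        ((innerSL ℝ (gradient f x)).toLinearMap.concaveOn convex_univ)
    have hcont : Continuous f := hf.continuous
    have key := tendsto_integral_rescaled_cap volume (h := h) (Q := fun v => ‖L v‖ ^ 2 / 2)
      (c := ((K : ℝ) ^ 2)⁻¹ / 2) (by fun_prop) hconvh (by simp [hh])
      (by positivity) (fun v => ?_) (fun t v => ?_) ?_
    · have hint := integral_comp_linearMap volume hL
        (fun z : EuclideanSpace ℝ (Fin n) => max (1 - ‖z‖ ^ 2 / 2) 0)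
      rw [hint, ← hC, smul_eq_mul, abs_inv, ← Real.sqrt_sq_eq_abs, ← hdet] at key
      refine key.congr' ?_
      filter_upwards [self_mem_nhdsWithin] with t ht
      have ht : 0 < t := ht
      rw [← hV x (t ^ 2) (by positivity), setIntegral_cap_eq_rescaled volume
        (l := fun v => f x + ⟪gradient f x, v⟫) hcont (by fun_prop) x ht, finrank_euclideanSpace_fin,
        mul_div_cancel_left₀ _ (by positivity)]
    · have h1 := hanti.le_mul_dist v 0
      rw [map_zero, dist_zero_right, dist_zero_right] at h1
      have h2 : ‖v‖ ^ 2 ≤ K ^ 2 * ‖L v‖ ^ 2 := by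
        rw [← mul_pow]
        gcongr
      have hK' : (0 : ℝ) < K := by exact_mod_cast hK
      have h3 : ((K : ℝ) ^ 2)⁻¹ * ‖v‖ ^ 2 ≤ ‖L v‖ ^ 2 := by
        rwa [inv_mul_le_iff₀ (by positivity)]
      linarith
    · rw [map_smul, norm_smul, mul_pow, Real.norm_eq_abs, sq_abs, mul_div_assoc]
    · refine ((contDiff_infty.1 hf 2).sub_second_order_taylor_isLittleO x).congr_left
        fun v => ?_
      simp only [hh, hgrad, hnorm, dotProduct_hessianMatrix_mulVec]
      ring
  refine ⟨(hessianMatrix f 0).det, (hhess 0).det_pos, fun x => ?_⟩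
  have heq := tendsto_nhds_unique (hlim x) (hlim 0)
  have := inv_injective (mul_right_cancel₀ hCpos.ne' heq)
  exact (Real.sqrt_inj (hhess x).det_pos.le (hhess 0).det_pos.le).1 this
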